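/- Key-rate lower bound via secrecy continuity: Consider a covert secrecy code with deterministic encoder x^n = f(m,k), uniform and independent secret message m ∈ M and key k ∈ K, and no public message, over the binary-input classical-quantum channel. If the secrecy criterion (1/|M|)Σ_m ||ρ_{W^n}^{(m)} − ρ̆_{W^n}||_1 ≤ δ_sec holds for some state ρ̆_{W^n} not depending on m, then log|K| ≥ I(k; W^n | m)_ρ ≥ I(mk; W^n)_ρ − δ_sec log|M| − g_2(δ_sec) = I(x^n; W^n)_{ρ̄} − δ_sec log|M| − g_2(δ_sec), where g_2(x) = (1+x) h_2(x/(1+x)) and h_2 is the binary entropy. -/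

import Mathlib

open Matrix Filter
open scoped Kronecker Classical ComplexOrder

noncomputable section

namespace CovertPaper



variable {ι : Type*} [Fintype ι] [DecidableEq ι]

/-- `ρ` is a density matrix (state). -/
def IsDensity (ρ : Matrix ι ι ℂ) : Prop := ρ.PosSemidef ∧ ρ.trace = 1

/-- `supp ρ ⊆ supp σ`, expressed (for Hermitian PSD matrices) as `ker σ ⊆ ker ρ`. -/
def SuppLE (ρ σ : Matrix ι ι ℂ) : Prop :=
  ∀ v : ι → ℂ, σ.mulVec v = 0 → ρ.mulVec v = 0

/-- Functional calculus on Hermitian matrices (junk value `0` otherwise). -/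
def matFun (f : ℝ → ℝ) (A : Matrix ι ι ℂ) : Matrix ι ι ℂ :=
  if hA : A.IsHermitian then
    (hA.eigenvectorUnitary : Matrix ι ι ℂ) *
      diagonal (fun i => (f (hA.eigenvalues i) : ℂ)) *
      (star (hA.eigenvectorUnitary : Matrix ι ι ℂ))
  else 0

/-- Matrix logarithm of a Hermitian matrix (`0` on the kernel, by `Real.log 0 = 0`). -/
def matLog (A : Matrix ι ι ℂ) : Matrix ι ι ℂ := matFun Real.log A

/-- Trace norm `‖A‖₁ = Tr √(AᴴA)`. -/
def traceNorm (A : Matrix ι ι ℂ) : ℝ := ((matFun Real.sqrt (Aᴴ * A)).trace).re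

/-- Fidelity `F(ρ,σ) = ‖√ρ√σ‖₁²`. -/
def fidelity (ρ σ : Matrix ι ι ℂ) : ℝ :=
  (traceNorm (matFun Real.sqrt ρ * matFun Real.sqrt σ)) ^ 2

/-- von Neumann entropy `H(ρ) = −Tr[ρ log ρ]` (natural logarithm). -/
def vnEnt (ρ : Matrix ι ι ℂ) : ℝ := -((ρ * matLog ρ).trace).re

/-- Quantum (Umegaki) relative entropy `D(ρ‖σ) = Tr[ρ (log ρ − log σ)]`; this real-valued
formula agrees with the usual definition whenever `supp ρ ⊆ supp σ`. -/
def relEnt (ρ σ : Matrix ι ι ℂ) : ℝ := ((ρ * (matLog ρ - matLog σ)).trace).re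

/-- The quantum chi-square divergence
`χ²(ρ‖σ) = (∂²/∂α²) D(αρ + (1−α)σ ‖ σ) |_{α=0}`. -/
def chiSq (ρ σ : Matrix ι ι ℂ) : ℝ :=
  iteratedDeriv 2 (fun α : ℝ => relEnt ((α : ℂ) • ρ + ((1 - α : ℝ) : ℂ) • σ) σ) 0

section PTrace

variable {α β : Type*} [Fintype α] [Fintype β]

/-- Partial trace over the second (right) tensor factor. -/
def ptraceRight (ρ : Matrix (α × β) (α × β) ℂ) : Matrix α α ℂ :=
  of fun a a' => ∑ b, ρ (a, b) (a', b)

/-- Partial trace over the first (left) tensor factor. -/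
def ptraceLeft (ρ : Matrix (α × β) (α × β) ℂ) : Matrix β β ℂ :=
  of fun b b' => ∑ a, ρ (a, b) (a, b')

/-- The product state `⊗_{i=1}^n ω_{x_i}` associated with a classical string `x^n`. -/
def stringState {d : ℕ} (ω : Fin d → Matrix β β ℂ) {n : ℕ} (x : Fin n → Fin d) :
    Matrix (Fin n → β) (Fin n → β) ℂ :=
  of fun a b => ∏ i, ω (x i) (a i) (b i)

/-- The `n`-fold tensor power `ω^{⊗n}`. -/
def tpow (ω : Matrix β β ℂ) (n : ℕ) : Matrix (Fin n → β) (Fin n → β) ℂ :=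
  of fun a b => ∏ i, ω (a i) (b i)

end PTrace

/-- Asymptotic little-o : `f ∈ o(g)` iff `f/g → 0`. -/
def LittleO (f g : ℕ → ℝ) : Prop :=
  Tendsto (fun n => f n / g n) atTop (nhds 0)

/-- Asymptotic little-omega : `f ∈ ω(g)` iff `|f/g| → ∞`. -/
def LittleOmega (f g : ℕ → ℝ) : Prop :=
  Tendsto (fun n => |f n / g n|) atTop atTop

section CQ

variable {B W : Type*} [Fintype B] [DecidableEq B] [Fintype W] [DecidableEq W]

/-- Bob's reduced output `σ_x` of the classical-quantum channel `π`. -/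
def bobOut (π : Fin 2 → Matrix (B × W) (B × W) ℂ) (x : Fin 2) : Matrix B B ℂ :=
  ptraceRight (π x)

/-- Willie's reduced output `ω_x` of the classical-quantum channel `π`. -/
def willieOut (π : Fin 2 → Matrix (B × W) (B × W) ℂ) (x : Fin 2) : Matrix W W ℂ :=
  ptraceLeft (π x)

variable (π : Fin 2 → Matrix (B × W) (B × W) ℂ)

/-- Bob's output state for the codeword `x^n`. -/
def bobWord {n : ℕ} (x : Fin n → Fin 2) : Matrix (Fin n → B) (Fin n → B) ℂ :=
  stringState (bobOut π) x

/-- Willie's output state for the codeword `x^n`. -/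
def willieWord {n : ℕ} (x : Fin n → Fin 2) : Matrix (Fin n → W) (Fin n → W) ℂ :=
  stringState (willieOut π) x

/-- `Λ` is a (sub-normalized) decoding POVM for each key value. -/
def IsPOVM {n M L K : ℕ} (Λ : Fin K → Fin M → Fin L → Matrix (Fin n → B) (Fin n → B) ℂ) :
    Prop :=
  (∀ k m ℓ, (Λ k m ℓ).PosSemidef) ∧
    ∀ k, ((1 : Matrix (Fin n → B) (Fin n → B) ℂ) - ∑ m, ∑ ℓ, Λ k m ℓ).PosSemidef

/-- Average decoding error probability of a covert secrecy code. -/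
def avgErr {n M L K : ℕ} (f : Fin M → Fin L → Fin K → Fin n → Fin 2)
    (Λ : Fin K → Fin M → Fin L → Matrix (Fin n → B) (Fin n → B) ℂ) : ℝ :=
  ((M : ℝ) * L * K)⁻¹ *
    ∑ m, ∑ ℓ, ∑ k, (1 - ((Λ k m ℓ * bobWord π (f m ℓ k)).trace).re)

/-- Willie's average output state `ρ̄_{W^n}` (averaged over message, public message and key). -/
def willieAvg {n M L K : ℕ} (f : Fin M → Fin L → Fin K → Fin n → Fin 2) :
    Matrix (Fin n → W) (Fin n → W) ℂ :=
  ((((M : ℝ) * L * K)⁻¹ : ℝ) : ℂ) • ∑ m, ∑ ℓ, ∑ k, willieWord π (f m ℓ k)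

/-- Willie's state `ρ_{W^n}^{(m)}` given the secret message `m` (averaged over `ℓ` and `k`). -/
def willieMsg {n M L K : ℕ} (f : Fin M → Fin L → Fin K → Fin n → Fin 2) (m : Fin M) :
    Matrix (Fin n → W) (Fin n → W) ℂ :=
  ((((L : ℝ) * K)⁻¹ : ℝ) : ℂ) • ∑ ℓ, ∑ k, willieWord π (f m ℓ k)

/-- The covertness criterion `D(ρ̄_{W^n} ‖ ω₀^{⊗n}) ≤ δ_cov`. -/
def Covert {n M L K : ℕ} (f : Fin M → Fin L → Fin K → Fin n → Fin 2) (δcov : ℝ) : Prop :=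
  relEnt (willieAvg π f) (tpow (willieOut π 0) n) ≤ δcov

/-- The secrecy criterion: some state `ρ̆` independent of `m` is `δ_sec`-close on average. -/
def Secret {n M L K : ℕ} (f : Fin M → Fin L → Fin K → Fin n → Fin 2) (δsec : ℝ) : Prop :=
  ∃ ρ' : Matrix (Fin n → W) (Fin n → W) ℂ, IsDensity ρ' ∧
    (M : ℝ)⁻¹ * ∑ m, traceNorm (willieMsg π f m - ρ') ≤ δsec

/-- Existence of an `(|M|,|L|,|K|,n,ε,δ_cov,δ_sec)` covert secrecy code. -/
def CodeExists (n M L K : ℕ) (ε δcov δsec : ℝ) : Prop :=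
  ∃ (f : Fin M → Fin L → Fin K → Fin n → Fin 2)
    (Λ : Fin K → Fin M → Fin L → Matrix (Fin n → B) (Fin n → B) ℂ),
      IsPOVM (B := B) Λ ∧ avgErr π f Λ ≤ ε ∧ Covert π f δcov ∧ Secret π f δsec

end CQ



section Statement18

/-- Binary entropy (natural logarithm). -/
def binEnt (p : ℝ) : ℝ := -(p * Real.log p) - (1 - p) * Real.log (1 - p)

/-- `g₂(x) = (1+x) h₂(x/(1+x))`. -/
def g2 (x : ℝ) : ℝ := (1 + x) * binEnt (x / (1 + x))

variable {B W : Type*} [Fintype B] [DecidableEq B] [Fintype W] [DecidableEq W]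

/-- Willie's state `ρ_{W^n}^{(m)}` averaged over the uniform key. -/
def wMsg (π : Fin 2 → Matrix (B × W) (B × W) ℂ)
    {n M K : ℕ} (f : Fin M → Fin K → Fin n → Fin 2) (m : Fin M) :
    Matrix (Fin n → W) (Fin n → W) ℂ :=
  (((K : ℝ)⁻¹ : ℝ) : ℂ) • ∑ k, willieWord π (f m k)

/-- Willie's state `ρ̄_{W^n}` averaged over the uniform message and key. -/
def wBar (π : Fin 2 → Matrix (B × W) (B × W) ℂ)
    {n M K : ℕ} (f : Fin M → Fin K → Fin n → Fin 2) :
    Matrix (Fin n → W) (Fin n → W) ℂ :=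
  ((((M : ℝ) * K)⁻¹ : ℝ) : ℂ) • ∑ m, ∑ k, willieWord π (f m k)

/-- The conditional quantum mutual information `I(k;W^n|m)` of the classical-classical-quantum
state of uniform independent `(m,k)` and Willie's output. -/
def condMI (π : Fin 2 → Matrix (B × W) (B × W) ℂ)
    {n M K : ℕ} (f : Fin M → Fin K → Fin n → Fin 2) : ℝ :=
  (M : ℝ)⁻¹ * ∑ m, (vnEnt (wMsg π f m) - (K : ℝ)⁻¹ * ∑ k, vnEnt (willieWord π (f m k)))

/-- The quantum mutual information `I(mk;W^n)`. -/
def jointMI (π : Fin 2 → Matrix (B × W) (B × W) ℂ)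
    {n M K : ℕ} (f : Fin M → Fin K → Fin n → Fin 2) : ℝ :=
  vnEnt (wBar π f) - ((M : ℝ) * K)⁻¹ * ∑ m, ∑ k, vnEnt (willieWord π (f m k))

/-- The Holevo information `I(x^n;W^n)` of the induced input distribution. -/
def inputMI (π : Fin 2 → Matrix (B × W) (B × W) ℂ)
    {n M K : ℕ} (f : Fin M → Fin K → Fin n → Fin 2) : ℝ :=
  vnEnt (wBar π f) - ∑ x : Fin n → Fin 2,
    (((Finset.univ.filter (fun p : Fin M × Fin K => f p.1 p.2 = x)).card : ℝ) /
        ((M : ℝ) * K)) * vnEnt (willieWord π x)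

/-!
The classical-quantum state `∑ₓ |x⟩⟨x| ⊗ A x` has conditional entropy
`H(X|W) = -∑ₓ D(A x ‖ ∑ A)`. It is nonnegative since `log` is operator monotone, and superadditive
in `A` since `D` is jointly convex: up to a linear term, `D` is an integral over the segment from
`B` to `A` of quadratic divergences, each of which is a maximum of functionals affine in `(A, B)`.
Splitting `A` into two parts, on the other hand, costs at most an entropy of mixing.

If two states `A`, `B` are at trace distance `ε`, then the positive and negative parts `P`, `N` of
`A - B` have trace `ε` and satisfy `A + N = B + P`. Comparing `H(X|W)` of both states with that of
this common sum gives the Alicki–Fannes–Winter bound. Applied to Willie's states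
`ρ^{(m)}` and the constant family `ρ̆`, it bounds `I(m;W^n)`, and the chain rule
`I(mk;W^n) = I(k;W^n|m) + I(m;W^n)` gives the key-rate bound.
-/

section SpectralSums

variable {A B : Matrix ι ι ℂ}

lemma continuousOn_spectrum (f : ℝ → ℝ) (A : Matrix ι ι ℂ) : ContinuousOn f (spectrum ℝ A) :=
  (Matrix.finite_real_spectrum (A := A)).continuousOn f

lemma cfc_eq_conj_diagonal (hA : A.IsHermitian) (f : ℝ → ℝ) :
    cfc f A = (hA.eigenvectorUnitary : Matrix ι ι ℂ) *
        diagonal (fun i ↦ (f (hA.eigenvalues i) : ℂ)) *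
        star (hA.eigenvectorUnitary : Matrix ι ι ℂ) := by
  rw [hA.cfc_eq, Matrix.IsHermitian.cfc, Unitary.conjStarAlgAut_apply]
  rfl

lemma matFun_eq_cfc (hA : A.IsHermitian) (f : ℝ → ℝ) : matFun f A = cfc f A := by
  rw [matFun, dif_pos hA, cfc_eq_conj_diagonal hA]

/-- The matrix of `C` with respect to the eigenbases of `B` (source) and `A` (target). -/
def eigenCoord (hA : A.IsHermitian) (hB : B.IsHermitian) (C : Matrix ι ι ℂ) : Matrix ι ι ℂ :=
  star (hA.eigenvectorUnitary : Matrix ι ι ℂ) * C * (hB.eigenvectorUnitary : Matrix ι ι ℂ)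

/-- The double spectral sum `∑ᵢⱼ |⟨uᵢ, vⱼ⟩|² k(aᵢ, bⱼ)`, where `A uᵢ = aᵢ uᵢ` and `B vⱼ = bⱼ vⱼ`:
the trace of the double operator integral of the kernel `k`, in which traces of products of
functions of `A` and `B`, and divergences between `A` and `B`, can be expressed. -/
def spectralSum (k : ℝ → ℝ → ℝ) (hA : A.IsHermitian) (hB : B.IsHermitian) : ℝ :=
  ∑ i, ∑ j, Complex.normSq (eigenCoord hA hB 1 i j) * k (hA.eigenvalues i) (hB.eigenvalues j)

lemma eigenCoord_surjective (hA : A.IsHermitian) (hB : B.IsHermitian) :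
    Function.Surjective (eigenCoord hA hB) := by
  intro X
  refine ⟨hA.eigenvectorUnitary.1 * X * star hB.eigenvectorUnitary.1, ?_⟩
  rw [eigenCoord, mul_assoc, mul_assoc _ (star _), Unitary.coe_star_mul_self, mul_one,
    ← mul_assoc, Unitary.coe_star_mul_self, one_mul]

lemma trace_conjTranspose_mul_cfc_mul_cfc (hA : A.IsHermitian) (hB : B.IsHermitian)
    (f g : ℝ → ℝ) (C D : Matrix ι ι ℂ) :
    (Cᴴ * cfc f A * D * cfc g B).trace =
      ∑ i, ∑ j, star (eigenCoord hA hB C i j) * eigenCoord hA hB D i j *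
        (f (hA.eigenvalues i) * g (hB.eigenvalues j) : ℝ) := by
  have rotate : (Cᴴ * cfc f A * D * cfc g B).trace =
      ((eigenCoord hA hB C)ᴴ * (diagonal (fun i ↦ (f (hA.eigenvalues i) : ℂ)) *
        eigenCoord hA hB D * diagonal (fun j ↦ (g (hB.eigenvalues j) : ℂ)))).trace := by
    rw [cfc_eq_conj_diagonal hA, cfc_eq_conj_diagonal hB, ← mul_assoc, trace_mul_comm]
    simp only [eigenCoord, star_eq_conjTranspose, conjTranspose_mul, conjTranspose_conjTranspose,
      mul_assoc]
  rw [rotate, trace, Finset.sum_comm]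
  refine Finset.sum_congr rfl fun j _ ↦ ?_
  rw [diag_apply, mul_apply]
  refine Finset.sum_congr rfl fun i _ ↦ ?_
  rw [mul_diagonal, diagonal_mul, conjTranspose_apply]
  push_cast
  ring

lemma cfc_real_id (hA : A.IsHermitian) : cfc (fun x : ℝ ↦ x) A = A :=
  cfc_id' ℝ A hA

lemma cfc_real_one (hA : A.IsHermitian) : cfc (fun _ : ℝ ↦ (1 : ℝ)) A = 1 :=
  cfc_const_one ℝ A hA

lemma trace_conjTranspose_mul_smul_add_smul (hA : A.IsHermitian) (hB : B.IsHermitian) (p q : ℝ)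
    (C D : Matrix ι ι ℂ) :
    (Cᴴ * (p • (A * D) + q • (D * B))).trace =
      ∑ i, ∑ j, star (eigenCoord hA hB C i j) * eigenCoord hA hB D i j *
        (p * hA.eigenvalues i + q * hB.eigenvalues j : ℝ) := by
  have hAD := trace_conjTranspose_mul_cfc_mul_cfc hA hB (fun x ↦ x) (fun _ ↦ 1) C D
  have hDB := trace_conjTranspose_mul_cfc_mul_cfc hA hB (fun _ ↦ 1) (fun y ↦ y) C D
  rw [cfc_real_id hA, cfc_real_one hB, mul_one, mul_assoc] at hAD
  rw [cfc_real_id hB, cfc_real_one hA, mul_one, mul_assoc] at hDB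
  rw [mul_add, mul_smul_comm, mul_smul_comm, trace_add, trace_smul, trace_smul, hAD, hDB]
  simp only [Complex.real_smul, Finset.mul_sum, ← Finset.sum_add_distrib]
  refine Finset.sum_congr rfl fun i _ ↦ Finset.sum_congr rfl fun j _ ↦ ?_
  push_cast
  ring

lemma re_trace_cfc_mul_cfc (hA : A.IsHermitian) (hB : B.IsHermitian) (f g : ℝ → ℝ) :
    (cfc f A * cfc g B).trace.re = spectralSum (fun x y ↦ f x * g y) hA hB := by
  have h := trace_conjTranspose_mul_cfc_mul_cfc hA hB f g 1 1
  rw [conjTranspose_one, one_mul, mul_one] at h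
  simp only [h, spectralSum, Complex.re_sum, ← starRingEnd_apply, ← Complex.normSq_eq_conj_mul_self,
    ← Complex.ofReal_mul, Complex.ofReal_re]

lemma re_trace_cfc (hA : A.IsHermitian) (f : ℝ → ℝ) :
    (cfc f A).trace.re = ∑ i, f (hA.eigenvalues i) := by
  rw [cfc_eq_conj_diagonal hA, trace_mul_comm, ← mul_assoc, Unitary.coe_star_mul_self, one_mul,
    trace_diagonal, Complex.re_sum]
  rfl

omit [DecidableEq ι] in
lemma re_trace_sum {κ : Type*} [Fintype κ] (A : κ → Matrix ι ι ℂ) :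
    (∑ x, A x).trace.re = ∑ x, (A x).trace.re := by
  rw [trace_sum, Complex.re_sum]

end SpectralSums

section RelativeEntropy

open scoped MatrixOrder Matrix.Norms.L2Operator

variable {A B A' B' : Matrix ι ι ℂ}

lemma relEnt_sub_trace_add_trace (hA : A.IsHermitian) (hB : B.IsHermitian) :
    relEnt A B - A.trace.re + B.trace.re =
      spectralSum (fun x y ↦ x * Real.log x - x * Real.log y - x + y) hA hB := by
  have hlogA : A * cfc Real.log A = cfc (fun x ↦ x * Real.log x) A := by
    rw [cfc_mul _ _ A (continuousOn_spectrum _ A) (continuousOn_spectrum _ A), cfc_real_id hA]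
  have hAlogA := re_trace_cfc_mul_cfc hA hB (fun x ↦ x * Real.log x) (fun _ ↦ 1)
  have hAlogB := re_trace_cfc_mul_cfc hA hB (fun x ↦ x) Real.log
  have htrA := re_trace_cfc_mul_cfc hA hB (fun x ↦ x) (fun _ ↦ 1)
  have htrB := re_trace_cfc_mul_cfc hA hB (fun _ ↦ 1) (fun y ↦ y)
  rw [cfc_real_one hB, mul_one] at hAlogA htrA
  rw [cfc_real_one hA, one_mul, cfc_real_id hB] at htrB
  rw [cfc_real_id hA] at hAlogB htrA
  rw [relEnt, matLog, matLog, matFun_eq_cfc hA, matFun_eq_cfc hB, mul_sub, trace_sub,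
    Complex.sub_re, hlogA, hAlogA, hAlogB, htrA, htrB]
  simp only [spectralSum, ← Finset.sum_sub_distrib, ← Finset.sum_add_distrib]
  refine Finset.sum_congr rfl fun i _ ↦ Finset.sum_congr rfl fun j _ ↦ ?_
  ring

lemma segment_pos {x y u : ℝ} (hx : 0 < x) (hy : 0 < y) (hu : u ∈ Set.Icc (0 : ℝ) 1) :
    0 < u * x + (1 - u) * y := by
  rcases hu.1.eq_or_lt with rfl | hu0
  · simpa
  · exact add_pos_of_pos_of_nonneg (mul_pos hu0 hx) (mul_nonneg (sub_nonneg.2 hu.2) hy.le)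

lemma continuousOn_one_sub_mul_sub_sq_div {x y : ℝ} (hx : 0 < x) (hy : 0 < y) :
    ContinuousOn (fun u ↦ (1 - u) * ((x - y) ^ 2 / (u * x + (1 - u) * y))) (Set.uIcc 0 1) := by
  rw [Set.uIcc_of_le zero_le_one]
  exact (continuousOn_const.sub continuousOn_id).mul
    (continuousOn_const.div (by fun_prop) fun u hu ↦ (segment_pos hx hy hu).ne')

lemma integral_one_sub_mul_sub_sq_div {x y : ℝ} (hx : 0 < x) (hy : 0 < y) :
    ∫ u in (0 : ℝ)..1, (1 - u) * ((x - y) ^ 2 / (u * x + (1 - u) * y)) =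
      x * Real.log x - x * Real.log y - x + y := by
  have hderiv : ∀ u ∈ Set.uIcc (0 : ℝ) 1,
      HasDerivAt (fun u ↦ x * Real.log (u * x + (1 - u) * y) - (u * x + (1 - u) * y))
        ((1 - u) * ((x - y) ^ 2 / (u * x + (1 - u) * y))) u := fun u hu ↦ by
    obtain ⟨z, hz⟩ : ∃ z, z = u * x + (1 - u) * y := ⟨_, rfl⟩
    have hpos := (segment_pos hx hy (Set.uIcc_of_le (zero_le_one (α := ℝ)) ▸ hu)).ne'
    have hseg : HasDerivAt (fun u : ℝ ↦ u * x + (1 - u) * y) (x - y) u :=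
      (((hasDerivAt_id' u).mul_const x).fun_add
        (((hasDerivAt_id' u).const_sub 1).mul_const y)).congr_deriv (by ring)
    refine (((hseg.log hpos).const_mul x).fun_sub hseg).congr_deriv ?_
    rw [← hz] at hpos ⊢
    field_simp
    linear_combination (y - x) * hz
  rw [intervalIntegral.integral_eq_sub_of_hasDerivAt hderiv
    (continuousOn_one_sub_mul_sub_sq_div hx hy).intervalIntegrable]
  simp only [one_mul, sub_self, zero_mul, add_zero, sub_zero, zero_add]
  ring

/-- The quadratic divergence with kernel `(x - y)² / (u x + (1 - u) y)`, a noncommutative version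
of the `χ²`-divergence of `A` from `B` relative to the segment point `u A + (1 - u) B`. -/
def quadDiv (u : ℝ) (hA : A.IsHermitian) (hB : B.IsHermitian) : ℝ :=
  spectralSum (fun x y ↦ (x - y) ^ 2 / (u * x + (1 - u) * y)) hA hB

lemma intervalIntegrable_one_sub_mul_quadDiv (hA : A.PosDef) (hB : B.PosDef) :
    IntervalIntegrable (fun u ↦ (1 - u) * quadDiv u hA.isHermitian hB.isHermitian)
      MeasureTheory.volume 0 1 := by
  refine ContinuousOn.intervalIntegrable ?_
  simp only [quadDiv, spectralSum, Finset.mul_sum, mul_left_comm (1 - (_ : ℝ))]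
  exact continuousOn_finsetSum _ fun i _ ↦ continuousOn_finsetSum _ fun j _ ↦
    continuousOn_const.fun_mul (continuousOn_one_sub_mul_sub_sq_div (hA.eigenvalues_pos i)
      (hB.eigenvalues_pos j))

lemma integral_one_sub_mul_quadDiv (hA : A.PosDef) (hB : B.PosDef) :
    ∫ u in (0 : ℝ)..1, (1 - u) * quadDiv u hA.isHermitian hB.isHermitian =
      relEnt A B - A.trace.re + B.trace.re := by
  have hcont i j := (continuousOn_one_sub_mul_sub_sq_div (hA.eigenvalues_pos i)
    (hB.eigenvalues_pos j)).intervalIntegrable.const_mul (μ := MeasureTheory.volume)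
      (Complex.normSq (eigenCoord hA.isHermitian hB.isHermitian 1 i j))
  have hsum i := IntervalIntegrable.sum Finset.univ fun j _ ↦ hcont i j
  simp only [Finset.sum_fn] at hsum
  rw [relEnt_sub_trace_add_trace hA.isHermitian hB.isHermitian]
  simp only [quadDiv, spectralSum, Finset.mul_sum, mul_left_comm (1 - (_ : ℝ))]
  rw [intervalIntegral.integral_finsetSum fun i _ ↦ hsum i]
  refine Finset.sum_congr rfl fun i _ ↦ ?_
  rw [intervalIntegral.integral_finsetSum fun j _ ↦ hcont i j]
  refine Finset.sum_congr rfl fun j _ ↦ ?_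
  rw [intervalIntegral.integral_const_mul,
    integral_one_sub_mul_sub_sq_div (hA.eigenvalues_pos i) (hB.eigenvalues_pos j)]

/-- The concave quadratic functional of the test matrix `C` whose maximum is `quadDiv u A B`. Being
affine in `(A, B)` for fixed `C`, it makes `quadDiv` jointly convex. -/
def quadFunctional (u : ℝ) (A B C : Matrix ι ι ℂ) : ℝ :=
  2 * (Cᴴ * (A - B)).trace.re - (Cᴴ * (u • (A * C) + (1 - u) • (C * B))).trace.re

omit [DecidableEq ι] in
lemma quadFunctional_add (u : ℝ) (A B A' B' C : Matrix ι ι ℂ) :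
    quadFunctional u (A + A') (B + B') C = quadFunctional u A B C + quadFunctional u A' B' C := by
  simp only [quadFunctional, mul_add, add_mul, mul_sub, smul_add, trace_add, trace_sub,
    Complex.add_re, Complex.sub_re]
  ring

lemma quadFunctional_eq_sum (u : ℝ) (hA : A.IsHermitian) (hB : B.IsHermitian)
    (C : Matrix ι ι ℂ) :
    quadFunctional u A B C =
      ∑ i, ∑ j, (2 * (star (eigenCoord hA hB C i j) * eigenCoord hA hB 1 i j).re *
          (hA.eigenvalues i - hB.eigenvalues j) -
        Complex.normSq (eigenCoord hA hB C i j) *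
          (u * hA.eigenvalues i + (1 - u) * hB.eigenvalues j)) := by
  have hlin := trace_conjTranspose_mul_smul_add_smul hA hB 1 (-1) C 1
  have hquad := trace_conjTranspose_mul_smul_add_smul hA hB u (1 - u) C C
  rw [one_smul, neg_one_smul, mul_one, one_mul, ← sub_eq_add_neg] at hlin
  rw [quadFunctional, hlin, hquad]
  simp only [Complex.re_sum, Complex.re_mul_ofReal, ← starRingEnd_apply,
    ← Complex.normSq_eq_conj_mul_self, Complex.ofReal_re, Finset.mul_sum,
    ← Finset.sum_sub_distrib]
  refine Finset.sum_congr rfl fun i _ ↦ Finset.sum_congr rfl fun j _ ↦ ?_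
  ring

lemma two_mul_re_mul_sub_normSq_mul_le (z g : ℂ) (d : ℝ) {w : ℝ} (hw : 0 < w) :
    2 * (star z * g).re * d - Complex.normSq z * w ≤ Complex.normSq g * (d ^ 2 / w) := by
  have hsq := div_nonneg (Complex.normSq_nonneg (w * z - d * g)) hw.le
  have hexpand : Complex.normSq (w * z - d * g) / w =
      Complex.normSq z * w - 2 * (star z * g).re * d + Complex.normSq g * (d ^ 2 / w) := by
    simp only [Complex.normSq_apply, Complex.sub_re, Complex.sub_im, Complex.mul_re,
      Complex.mul_im, Complex.ofReal_re, Complex.ofReal_im, Complex.star_def, Complex.conj_re,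
      Complex.conj_im]
    field_simp
    ring
  linarith

lemma two_mul_re_mul_sub_normSq_mul_eq (g : ℂ) (d : ℝ) {w : ℝ} (hw : 0 < w) :
    2 * (star ((d / w : ℝ) * g) * g).re * d - Complex.normSq ((d / w : ℝ) * g) * w =
      Complex.normSq g * (d ^ 2 / w) := by
  rw [star_mul', ← starRingEnd_apply, ← starRingEnd_apply, mul_assoc (starRingEnd ℂ _),
    ← Complex.normSq_eq_conj_mul_self, Complex.conj_ofReal, ← Complex.ofReal_mul,
    Complex.ofReal_re, Complex.normSq_mul, Complex.normSq_ofReal]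
  field_simp
  ring

lemma quadFunctional_le_quadDiv (hA : A.PosDef) (hB : B.PosDef) {u : ℝ}
    (hu : u ∈ Set.Icc (0 : ℝ) 1) (C : Matrix ι ι ℂ) :
    quadFunctional u A B C ≤ quadDiv u hA.isHermitian hB.isHermitian := by
  rw [quadFunctional_eq_sum u hA.isHermitian hB.isHermitian]
  exact Finset.sum_le_sum fun i _ ↦ Finset.sum_le_sum fun j _ ↦
    two_mul_re_mul_sub_normSq_mul_le _ _ _
      (segment_pos (hA.eigenvalues_pos i) (hB.eigenvalues_pos j) hu)

lemma exists_quadFunctional_eq_quadDiv (hA : A.PosDef) (hB : B.PosDef) {u : ℝ}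
    (hu : u ∈ Set.Icc (0 : ℝ) 1) :
    ∃ C, quadFunctional u A B C = quadDiv u hA.isHermitian hB.isHermitian := by
  obtain ⟨C, hC⟩ := eigenCoord_surjective hA.isHermitian hB.isHermitian
    (of fun i j ↦ (((hA.isHermitian.eigenvalues i - hB.isHermitian.eigenvalues j) /
        (u * hA.isHermitian.eigenvalues i + (1 - u) * hB.isHermitian.eigenvalues j) : ℝ) : ℂ) *
      eigenCoord hA.isHermitian hB.isHermitian 1 i j)
  refine ⟨C, ?_⟩
  rw [quadFunctional_eq_sum u hA.isHermitian hB.isHermitian, hC]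
  exact Finset.sum_congr rfl fun i _ ↦ Finset.sum_congr rfl fun j _ ↦
    two_mul_re_mul_sub_normSq_mul_eq _ _
      (segment_pos (hA.eigenvalues_pos i) (hB.eigenvalues_pos j) hu)

lemma quadDiv_add_le (hA : A.PosDef) (hB : B.PosDef) (hA' : A'.PosDef) (hB' : B'.PosDef) {u : ℝ}
    (hu : u ∈ Set.Icc (0 : ℝ) 1) :
    quadDiv u (hA.add hA').isHermitian (hB.add hB').isHermitian ≤
      quadDiv u hA.isHermitian hB.isHermitian + quadDiv u hA'.isHermitian hB'.isHermitian := by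
  obtain ⟨C, hC⟩ := exists_quadFunctional_eq_quadDiv (hA.add hA') (hB.add hB') hu
  rw [← hC, quadFunctional_add]
  exact add_le_add (quadFunctional_le_quadDiv hA hB hu C) (quadFunctional_le_quadDiv hA' hB' hu C)

theorem relEnt_add_le (hA : A.PosDef) (hB : B.PosDef) (hA' : A'.PosDef) (hB' : B'.PosDef) :
    relEnt (A + A') (B + B') ≤ relEnt A B + relEnt A' B' := by
  have hint := intervalIntegrable_one_sub_mul_quadDiv hA hB
  have hint' := intervalIntegrable_one_sub_mul_quadDiv hA' hB'
  have hle := intervalIntegral.integral_mono_on zero_le_one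
    (intervalIntegrable_one_sub_mul_quadDiv (hA.add hA') (hB.add hB')) (hint.add hint')
    fun u hu ↦ by
      rw [← mul_add]
      exact mul_le_mul_of_nonneg_left (quadDiv_add_le hA hB hA' hB' hu) (sub_nonneg.2 hu.2)
  rw [intervalIntegral.integral_add hint hint', integral_one_sub_mul_quadDiv hA hB,
    integral_one_sub_mul_quadDiv hA' hB', integral_one_sub_mul_quadDiv (hA.add hA') (hB.add hB'),
    trace_add, trace_add, Complex.add_re, Complex.add_re] at hle
  linarith

lemma quadDiv_nonneg (hA : A.PosDef) (hB : B.PosDef) {u : ℝ} (hu : u ∈ Set.Icc (0 : ℝ) 1) :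
    0 ≤ quadDiv u hA.isHermitian hB.isHermitian := by
  simpa [quadFunctional] using quadFunctional_le_quadDiv hA hB hu 0

theorem trace_sub_trace_le_relEnt (hA : A.PosDef) (hB : B.PosDef) :
    A.trace.re - B.trace.re ≤ relEnt A B := by
  have hnonneg : 0 ≤ ∫ u in (0 : ℝ)..1, (1 - u) * quadDiv u hA.isHermitian hB.isHermitian :=
    intervalIntegral.integral_nonneg zero_le_one fun u hu ↦
      mul_nonneg (sub_nonneg.2 hu.2) (quadDiv_nonneg hA hB hu)
  rw [integral_one_sub_mul_quadDiv hA hB] at hnonneg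
  linarith

lemma matLog_smul (hB : B.PosDef) {c : ℝ} (hc : 0 < c) :
    matLog (c • B) = Real.log c • 1 + matLog B := by
  rw [matLog, matLog, matFun_eq_cfc hB.isHermitian, matFun_eq_cfc (hB.smul hc).isHermitian,
    ← Algebra.algebraMap_eq_smul_one]
  exact CFC.log_smul' B hc (Matrix.isStrictlyPositive_iff_posDef.2 hB)

lemma relEnt_smul_right (A : Matrix ι ι ℂ) (hB : B.PosDef) {c : ℝ} (hc : 0 < c) :
    relEnt A (c • B) = relEnt A B - Real.log c * A.trace.re := by
  rw [relEnt, relEnt, matLog_smul hB hc, sub_add_eq_sub_sub_swap, mul_sub _ _ (_ • _), trace_sub,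
    mul_smul_comm, mul_one, trace_smul, Complex.sub_re, Complex.smul_re, smul_eq_mul]

theorem trace_mul_log_trace_sub_log_trace_le_relEnt (hA : A.PosDef) (hB : B.PosDef) :
    A.trace.re * (Real.log A.trace.re - Real.log B.trace.re) ≤ relEnt A B := by
  cases isEmpty_or_nonempty ι
  · simp [relEnt, trace]
  have hposA : 0 < A.trace.re := (Complex.pos_iff.1 hA.trace_pos).1
  have hposB : 0 < B.trace.re := (Complex.pos_iff.1 hB.trace_pos).1
  have hc := div_pos hposA hposB
  have hklein := trace_sub_trace_le_relEnt hA (hB.smul hc)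
  rw [relEnt_smul_right A hB hc, trace_smul, Complex.smul_re, smul_eq_mul,
    div_mul_cancel₀ _ hposB.ne', Real.log_div hposA.ne' hposB.ne'] at hklein
  linarith

omit [DecidableEq ι] in
lemma re_trace_mul_nonneg (hA : A.PosSemidef) (hB : B.PosSemidef) : 0 ≤ (A * B).trace.re := by
  obtain ⟨C, rfl⟩ := CStarAlgebra.nonneg_iff_eq_star_mul_self.1 hA.nonneg
  rw [star_eq_conjTranspose, mul_assoc, trace_mul_comm]
  exact (Complex.nonneg_iff.1 (hB.mul_mul_conjTranspose_same C).trace_nonneg).1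

theorem relEnt_nonpos_of_posSemidef_sub (hA : A.PosDef) (hAB : (B - A).PosSemidef) :
    relEnt A B ≤ 0 := by
  have hB : B.IsHermitian := add_sub_cancel A B ▸ hA.isHermitian.add hAB.isHermitian
  have hlog : (matLog B - matLog A).PosSemidef := by
    rw [matLog, matLog, matFun_eq_cfc hA.isHermitian, matFun_eq_cfc hB, ← Matrix.le_iff]
    exact CFC.log_le_log (Matrix.le_iff.2 hAB) (Matrix.isStrictlyPositive_iff_posDef.2 hA)
  have htrace := re_trace_mul_nonneg hA.posSemidef hlog
  rw [← neg_sub, mul_neg, trace_neg, Complex.neg_re] at htrace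
  exact neg_nonneg.1 htrace

end RelativeEntropy

section VonNeumannEntropy

variable {A : Matrix ι ι ℂ}

lemma vnEnt_eq_re_trace_cfc (hA : A.IsHermitian) : vnEnt A = (cfc Real.negMulLog A).trace.re := by
  have hlog : cfc (fun x ↦ x * Real.log x) A = A * cfc Real.log A := by
    rw [cfc_mul _ _ A (continuousOn_spectrum _ A) (continuousOn_spectrum _ A), cfc_real_id hA]
  rw [vnEnt, matLog, matFun_eq_cfc hA, ← hlog, re_trace_cfc hA, re_trace_cfc hA,
    ← Finset.sum_neg_distrib]
  simp only [Real.negMulLog, neg_mul]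

open scoped Matrix.Norms.L2Operator in
lemma continuousOn_vnEnt : ContinuousOn (vnEnt (ι := ι)) {A | A.IsHermitian} := by
  have hcfc : ContinuousOn (fun A : Matrix ι ι ℂ ↦ cfc Real.negMulLog A) {A | A.IsHermitian} :=
    continuousOn_id.cfc_of_mem_nhdsSet Real.negMulLog univ_mem (fun _ hA ↦ hA)
      Real.continuous_negMulLog.continuousOn
  exact (Complex.continuous_re.comp_continuousOn (continuous_id.matrix_trace.comp_continuousOn
    hcfc)).congr fun A hA ↦ vnEnt_eq_re_trace_cfc hA

lemma vnEnt_smul (hA : A.IsHermitian) (c : ℝ) :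
    vnEnt (c • A) = c * vnEnt A + Real.negMulLog c * A.trace.re := by
  have hid := re_trace_cfc hA fun x ↦ x
  rw [cfc_real_id hA] at hid
  have hcomp : cfc Real.negMulLog (c • A) = cfc (fun x ↦ Real.negMulLog (c • x)) A :=
    (cfc_comp_smul c _ A Real.continuous_negMulLog.continuousOn hA).symm
  rw [vnEnt_eq_re_trace_cfc (hA.smul (IsSelfAdjoint.all c)), vnEnt_eq_re_trace_cfc hA, hcomp,
    re_trace_cfc hA, re_trace_cfc hA, hid, Finset.mul_sum, Finset.mul_sum,
    ← Finset.sum_add_distrib]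
  refine Finset.sum_congr rfl fun i _ ↦ ?_
  rw [smul_eq_mul, Real.negMulLog_mul]
  ring

end VonNeumannEntropy

section ConditionalEntropy

variable {κ : Type*} [Fintype κ] {A B : κ → Matrix ι ι ℂ}

/-- The conditional entropy `H(X|W)` of the unnormalized classical-quantum state
`∑ₓ |x⟩⟨x| ⊗ A x`, that is, its entropy minus the entropy of its quantum marginal `∑ₓ A x`. -/
def condEnt (A : κ → Matrix ι ι ℂ) : ℝ := ∑ x, vnEnt (A x) - vnEnt (∑ x, A x)

lemma condEnt_eq_neg_sum_relEnt (A : κ → Matrix ι ι ℂ) :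
    condEnt A = -∑ x, relEnt (A x) (∑ y, A y) := by
  have hmarginal : ((∑ x, A x) * matLog (∑ x, A x)).trace.re =
      ∑ x, (A x * matLog (∑ y, A y)).trace.re := by
    rw [Finset.sum_mul, re_trace_sum]
  simp only [condEnt, vnEnt, relEnt, hmarginal, mul_sub, trace_sub, Complex.sub_re,
    Finset.sum_sub_distrib, Finset.sum_neg_distrib]
  ring

lemma continuousOn_condEnt :
    ContinuousOn condEnt {A : κ → Matrix ι ι ℂ | ∀ x, (A x).IsHermitian} := by
  refine (continuousOn_finsetSum _ fun x _ ↦ ?_).sub ?_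
  · exact continuousOn_vnEnt.comp (continuous_apply x).continuousOn fun _ hA ↦ hA x
  · exact continuousOn_vnEnt.comp
      (continuous_finsetSum _ fun x _ ↦ continuous_apply x).continuousOn
      fun _ hA ↦ isSelfAdjoint_sum _ fun x _ ↦ hA x

lemma tendsto_condEnt_add_smul {D : κ → Matrix ι ι ℂ} (hA : ∀ x, (A x).IsHermitian)
    (hD : ∀ x, (D x).IsHermitian) :
    Tendsto (fun t : ℝ ↦ condEnt (A + t • D)) (nhdsWithin 0 (Set.Ioi 0)) (nhds (condEnt A)) := by
  have hpath : Tendsto (fun t : ℝ ↦ A + t • D) (nhds 0) (nhds A) :=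
    Continuous.tendsto' (by fun_prop) 0 A (by rw [zero_smul, add_zero])
  exact (continuousOn_condEnt A hA).tendsto.comp (tendsto_nhdsWithin_iff.2
    ⟨hpath.mono_left nhdsWithin_le_nhds,
      Eventually.of_forall fun t x ↦ (hA x).add ((hD x).smul (IsSelfAdjoint.all t))⟩)

omit [Fintype ι] [Fintype κ] in
lemma posDef_add_smul_one (hA : ∀ x, (A x).PosSemidef) {t : ℝ} (ht : 0 < t) (x : κ) :
    ((A + t • 1) x).PosDef :=
  PosDef.posSemidef_add (hA x) (PosDef.one.smul ht)

lemma condEnt_nonneg_of_posDef (hA : ∀ x, (A x).PosDef) : 0 ≤ condEnt A := by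
  rw [condEnt_eq_neg_sum_relEnt, neg_nonneg]
  refine Finset.sum_nonpos fun x _ ↦ relEnt_nonpos_of_posSemidef_sub (hA x) ?_
  rw [← Finset.sum_erase_eq_sub (Finset.mem_univ x)]
  exact posSemidef_sum _ fun y _ ↦ (hA y).posSemidef

theorem condEnt_nonneg (hA : ∀ x, (A x).PosSemidef) : 0 ≤ condEnt A :=
  ge_of_tendsto (tendsto_condEnt_add_smul (fun x ↦ (hA x).isHermitian) fun _ ↦ isHermitian_one)
    (eventually_mem_nhdsWithin.mono fun _ ht ↦
      condEnt_nonneg_of_posDef (posDef_add_smul_one hA ht))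

lemma condEnt_add_condEnt_le_of_posDef (hA : ∀ x, (A x).PosDef) (hB : ∀ x, (B x).PosDef) :
    condEnt A + condEnt B ≤ condEnt (A + B) := by
  have hsum {C : κ → Matrix ι ι ℂ} (hC : ∀ x, (C x).PosDef) (x : κ) : (∑ y, C y).PosDef :=
    posDef_sum ⟨x, Finset.mem_univ x⟩ fun y _ ↦ hC y
  rw [condEnt_eq_neg_sum_relEnt, condEnt_eq_neg_sum_relEnt, condEnt_eq_neg_sum_relEnt, ← neg_add,
    neg_le_neg_iff, ← Finset.sum_add_distrib]
  refine Finset.sum_le_sum fun x _ ↦ ?_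
  simpa only [Pi.add_apply, Finset.sum_add_distrib] using
    relEnt_add_le (hA x) (hsum hA x) (hB x) (hsum hB x)

theorem condEnt_add_condEnt_le (hA : ∀ x, (A x).PosSemidef) (hB : ∀ x, (B x).PosSemidef) :
    condEnt A + condEnt B ≤ condEnt (A + B) := by
  have hlimA := tendsto_condEnt_add_smul (D := 1) (fun x ↦ (hA x).isHermitian)
    fun _ ↦ isHermitian_one
  have hlimB := tendsto_condEnt_add_smul (D := 1) (fun x ↦ (hB x).isHermitian)
    fun _ ↦ isHermitian_one
  have hlimAB := tendsto_condEnt_add_smul (A := A + B) (D := 1 + 1)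
    (fun x ↦ ((hA x).add (hB x)).isHermitian) fun _ ↦ isHermitian_one.add isHermitian_one
  refine le_of_tendsto_of_tendsto (hlimA.add hlimB) hlimAB
    (eventually_mem_nhdsWithin.mono fun t ht ↦ ?_)
  beta_reduce
  rw [smul_add, add_add_add_comm]
  exact condEnt_add_condEnt_le_of_posDef (posDef_add_smul_one hA ht) (posDef_add_smul_one hB ht)

lemma condEnt_le_sum_negMulLog_of_posDef (hA : ∀ x, (A x).PosDef) :
    condEnt A ≤ ∑ x, Real.negMulLog (A x).trace.re - Real.negMulLog (∑ x, A x).trace.re := by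
  have hpoint (x : κ) : -relEnt (A x) (∑ y, A y) ≤
      Real.negMulLog (A x).trace.re + (A x).trace.re * Real.log (∑ y, A y).trace.re := by
    have := trace_mul_log_trace_sub_log_trace_le_relEnt (hA x)
      (posDef_sum ⟨x, Finset.mem_univ x⟩ fun y _ ↦ hA y)
    rw [Real.negMulLog]
    linarith
  calc condEnt A = ∑ x, -relEnt (A x) (∑ y, A y) := by
        rw [condEnt_eq_neg_sum_relEnt, Finset.sum_neg_distrib]
    _ ≤ ∑ x, (Real.negMulLog (A x).trace.re +
          (A x).trace.re * Real.log (∑ y, A y).trace.re) := Finset.sum_le_sum fun x _ ↦ hpoint x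
    _ = ∑ x, Real.negMulLog (A x).trace.re - Real.negMulLog (∑ x, A x).trace.re := by
        rw [Finset.sum_add_distrib, ← Finset.sum_mul, ← re_trace_sum, Real.negMulLog, neg_mul,
          sub_neg_eq_add]

theorem condEnt_le_sum_negMulLog (hA : ∀ x, (A x).PosSemidef) :
    condEnt A ≤ ∑ x, Real.negMulLog (A x).trace.re - Real.negMulLog (∑ x, A x).trace.re := by
  have hcont : Continuous fun t : ℝ ↦ ∑ x, Real.negMulLog ((A + t • 1) x).trace.re -
      Real.negMulLog (∑ x, (A + t • 1) x).trace.re := by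
    fun_prop
  have hlim := (hcont.tendsto 0).mono_left (nhdsWithin_le_nhds (s := Set.Ioi 0))
  simp only [zero_smul, add_zero] at hlim
  exact le_of_tendsto_of_tendsto
    (tendsto_condEnt_add_smul (fun x ↦ (hA x).isHermitian) fun _ ↦ isHermitian_one) hlim
    (eventually_mem_nhdsWithin.mono fun _ ht ↦
      condEnt_le_sum_negMulLog_of_posDef (posDef_add_smul_one hA ht))

lemma sum_negMulLog_sub_negMulLog_sum_le {a : κ → ℝ} (ha : ∀ x, 0 ≤ a x) :
    ∑ x, Real.negMulLog (a x) - Real.negMulLog (∑ x, a x) ≤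
      (∑ x, a x) * Real.log (Fintype.card κ) := by
  cases isEmpty_or_nonempty κ
  · simp
  have hcard : (0 : ℝ) < Fintype.card κ := Nat.cast_pos.2 Fintype.card_pos
  have hjensen := Real.concaveOn_negMulLog.le_map_sum (t := Finset.univ) (p := a)
    (w := fun _ : κ ↦ (Fintype.card κ : ℝ)⁻¹) (fun _ _ ↦ inv_nonneg.2 hcard.le)
    (by simp [hcard.ne']) fun x _ ↦ ha x
  simp only [smul_eq_mul, ← Finset.mul_sum] at hjensen
  rw [Real.negMulLog_mul, ← mul_le_mul_iff_right₀ hcard, Real.negMulLog, Real.log_inv] at hjensen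
  field_simp at hjensen
  linarith

theorem condEnt_le_trace_mul_log_card (hA : ∀ x, (A x).PosSemidef) :
    condEnt A ≤ (∑ x, A x).trace.re * Real.log (Fintype.card κ) := by
  refine (condEnt_le_sum_negMulLog hA).trans ?_
  rw [re_trace_sum]
  exact sum_negMulLog_sub_negMulLog_sum_le fun x ↦ (Complex.nonneg_iff.1 (hA x).trace_nonneg).1

lemma vnEnt_add_le {P Q : Matrix ι ι ℂ} (hP : P.PosSemidef) (hQ : Q.PosSemidef) :
    vnEnt (P + Q) ≤ vnEnt P + vnEnt Q := by
  simpa [condEnt] using condEnt_nonneg (A := ![P, Q]) (Fin.forall_fin_two.2 ⟨hP, hQ⟩)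

lemma vnEnt_add_vnEnt_le {P Q : Matrix ι ι ℂ} (hP : P.PosSemidef) (hQ : Q.PosSemidef) :
    vnEnt P + vnEnt Q ≤ vnEnt (P + Q) + (Real.negMulLog P.trace.re + Real.negMulLog Q.trace.re -
      Real.negMulLog (P + Q).trace.re) := by
  have h := condEnt_le_sum_negMulLog (A := ![P, Q]) (Fin.forall_fin_two.2 ⟨hP, hQ⟩)
  simp only [condEnt, Fin.sum_univ_two, cons_val_zero, cons_val_one] at h
  linarith

theorem condEnt_add_le (hA : ∀ x, (A x).PosSemidef) (hB : ∀ x, (B x).PosSemidef) :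
    condEnt (A + B) ≤ condEnt A + condEnt B + (Real.negMulLog (∑ x, A x).trace.re +
      Real.negMulLog (∑ x, B x).trace.re - Real.negMulLog (∑ x, (A + B) x).trace.re) := by
  have hjoint : ∑ x, vnEnt (A x + B x) ≤ ∑ x, vnEnt (A x) + ∑ x, vnEnt (B x) := by
    rw [← Finset.sum_add_distrib]
    exact Finset.sum_le_sum fun x _ ↦ vnEnt_add_le (hA x) (hB x)
  have hmarginal := vnEnt_add_vnEnt_le (posSemidef_sum Finset.univ fun x _ ↦ hA x)
    (posSemidef_sum Finset.univ fun x _ ↦ hB x)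
  simp only [condEnt, Pi.add_apply, Finset.sum_add_distrib]
  linarith

end ConditionalEntropy

section TraceNorm

open scoped MatrixOrder Matrix.Norms.L2Operator

variable {A : Matrix ι ι ℂ}

lemma traceNorm_eq_trace_posPart_add_trace_negPart (hA : A.IsHermitian) :
    traceNorm A = A⁺.trace.re + A⁻.trace.re := by
  rw [traceNorm, matFun_eq_cfc (isHermitian_conjTranspose_mul_self A), ← star_eq_conjTranspose,
    ← cfcₙ_eq_cfc, ← CFC.sqrt_eq_real_sqrt _ (star_mul_self_nonneg A), ← CFC.abs,
    ← CFC.posPart_add_negPart A hA, trace_add, Complex.add_re]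

lemma traceNorm_nonneg (hA : A.IsHermitian) : 0 ≤ traceNorm A := by
  rw [traceNorm_eq_trace_posPart_add_trace_negPart hA]
  have hpos := (nonneg_iff_posSemidef.1 (CFC.posPart_nonneg A)).trace_nonneg
  have hneg := (nonneg_iff_posSemidef.1 (CFC.negPart_nonneg A)).trace_nonneg
  exact add_nonneg (Complex.nonneg_iff.1 hpos).1 (Complex.nonneg_iff.1 hneg).1

lemma traceNorm_smul (hA : A.IsHermitian) {c : ℝ} (hc : 0 ≤ c) :
    traceNorm (c • A) = c * traceNorm A := by
  rw [traceNorm_eq_trace_posPart_add_trace_negPart (hA.smul (IsSelfAdjoint.all c)),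
    traceNorm_eq_trace_posPart_add_trace_negPart hA, CFC.posPart_smul_of_nonneg hc,
    CFC.negPart_smul_of_nonneg hc, trace_smul, trace_smul, Complex.smul_re, Complex.smul_re,
    smul_eq_mul, smul_eq_mul, mul_add]

end TraceNorm

section G2

lemma g2_eq_negMulLog_sub {x : ℝ} (hx : 0 ≤ x) :
    g2 x = Real.negMulLog x - Real.negMulLog (1 + x) := by
  have hs : 1 + x ≠ 0 := by positivity
  have hp := Real.negMulLog_mul (1 + x) (x / (1 + x))
  have hq := Real.negMulLog_mul (1 + x) (1 - x / (1 + x))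
  rw [mul_div_cancel₀ _ hs] at hp
  rw [mul_sub, mul_div_cancel₀ _ hs, mul_one, add_sub_cancel_right, Real.negMulLog_one] at hq
  have hbin : binEnt (x / (1 + x)) =
      Real.negMulLog (x / (1 + x)) + Real.negMulLog (1 - x / (1 + x)) := by
    simp only [binEnt, Real.negMulLog]
    ring
  rw [g2, hbin]
  linear_combination -hp - hq

lemma monotoneOn_g2 : MonotoneOn g2 (Set.Ici 0) := by
  have hmono : MonotoneOn (fun x ↦ Real.negMulLog x - Real.negMulLog (1 + x)) (Set.Ici 0) := by
    refine monotoneOn_of_hasDerivWithinAt_nonneg (convex_Ici 0) (by fun_prop)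
      (f' := fun x ↦ Real.log (1 + x) - Real.log x) (fun x hx ↦ ?_) fun x hx ↦ ?_ <;>
      rw [interior_Ici, Set.mem_Ioi] at hx
    · have hshift := (Real.hasDerivAt_negMulLog (x := 1 + x) (by positivity)).comp_const_add 1 x
      exact (((Real.hasDerivAt_negMulLog hx.ne').sub hshift).congr_deriv
        (by ring)).hasDerivWithinAt
    · exact sub_nonneg.2 (Real.log_le_log hx (by linarith))
  exact hmono.congr fun x hx ↦ (g2_eq_negMulLog_sub hx).symm

end G2

section Continuity

open scoped MatrixOrder Matrix.Norms.L2Operator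

variable {κ : Type*} [Fintype κ] {A B : κ → Matrix ι ι ℂ}

lemma condEnt_le_of_add_eq_add {N P : κ → Matrix ι ι ℂ} (hA : ∀ x, (A x).PosSemidef)
    (hB : ∀ x, (B x).PosSemidef) (hN : ∀ x, (N x).PosSemidef) (hP : ∀ x, (P x).PosSemidef)
    (hcommon : A + N = B + P) (htA : (∑ x, A x).trace = 1) :
    condEnt B ≤ condEnt A + (∑ x, N x).trace.re * Real.log (Fintype.card κ) +
      g2 (∑ x, N x).trace.re := by
  have hN₀ := (Complex.nonneg_iff.1 (posSemidef_sum Finset.univ fun x _ ↦ hN x).trace_nonneg).1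
  have hcard := condEnt_le_trace_mul_log_card hN
  calc condEnt B ≤ condEnt B + condEnt P := le_add_of_nonneg_right (condEnt_nonneg hP)
    _ ≤ condEnt (A + N) := hcommon ▸ condEnt_add_condEnt_le hB hP
    _ ≤ condEnt A + condEnt N + g2 (∑ x, N x).trace.re := by
      simpa only [Pi.add_apply, Finset.sum_add_distrib, trace_add, Complex.add_re, htA,
        Complex.one_re, Real.negMulLog_one, zero_add, g2_eq_negMulLog_sub hN₀]
        using condEnt_add_le hA hN
    _ ≤ _ := by gcongr

/-- The **Alicki–Fannes–Winter** continuity bound. -/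
theorem condEnt_le_condEnt_add_log_card_add_g2 (hA : ∀ x, (A x).PosSemidef)
    (hB : ∀ x, (B x).PosSemidef) (htA : (∑ x, A x).trace = 1) (htB : (∑ x, B x).trace = 1)
    {ε : ℝ} (hε : ∑ x, traceNorm (A x - B x) = 2 * ε) :
    condEnt B ≤ condEnt A + ε * Real.log (Fintype.card κ) + g2 ε := by
  set P : κ → Matrix ι ι ℂ := fun x ↦ (A x - B x)⁺
  set N : κ → Matrix ι ι ℂ := fun x ↦ (A x - B x)⁻
  have hherm (x : κ) : (A x - B x).IsHermitian := (hA x).isHermitian.sub (hB x).isHermitian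
  have hP (x : κ) : (P x).PosSemidef := nonneg_iff_posSemidef.1 (CFC.posPart_nonneg _)
  have hN (x : κ) : (N x).PosSemidef := nonneg_iff_posSemidef.1 (CFC.negPart_nonneg _)
  have hsub : P - N = A - B := funext fun x ↦ CFC.posPart_sub_negPart (A x - B x) (hherm x)
  have hcommon : A + N = B + P :=
    (sub_eq_sub_iff_add_eq_add.1 hsub.symm).trans (add_comm P B)
  have htrace : (∑ x, P x).trace.re = (∑ x, N x).trace.re := by
    have h := congrArg (fun C : κ → Matrix ι ι ℂ ↦ (∑ x, C x).trace.re) hcommon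
    simp only [Pi.add_apply, Finset.sum_add_distrib, trace_add, Complex.add_re, htA, htB] at h
    linarith
  have htraceN : (∑ x, N x).trace.re = ε := by
    simp only [traceNorm_eq_trace_posPart_add_trace_negPart (hherm _),
      Finset.sum_add_distrib] at hε
    simp only [re_trace_sum] at htrace ⊢
    linarith
  exact htraceN ▸ condEnt_le_of_add_eq_add hA hB hN hP hcommon htA

end Continuity

section HolevoInformation

variable {κ : Type*} [Fintype κ] {A : κ → Matrix ι ι ℂ}

/-- The Holevo information `I(x;W)` of the ensemble in which `x` is uniform on `κ` and the system
`W` is in the state `A x`. -/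
def holevoInfo (A : κ → Matrix ι ι ℂ) : ℝ :=
  vnEnt ((Fintype.card κ : ℝ)⁻¹ • ∑ x, A x) - (Fintype.card κ : ℝ)⁻¹ * ∑ x, vnEnt (A x)

lemma condEnt_smul (hA : ∀ x, (A x).IsHermitian) (c : ℝ) : condEnt (c • A) = c * condEnt A := by
  have hmarginal := vnEnt_smul (isSelfAdjoint_sum Finset.univ fun x _ ↦ hA x) c
  simp only [condEnt, Pi.smul_apply, ← Finset.smul_sum, hmarginal, vnEnt_smul (hA _),
    Finset.sum_add_distrib, ← Finset.mul_sum, re_trace_sum]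
  ring

lemma holevoInfo_const [Nonempty κ] (σ : Matrix ι ι ℂ) : holevoInfo (fun _ : κ ↦ σ) = 0 := by
  have hcard : (Fintype.card κ : ℝ) ≠ 0 := Nat.cast_ne_zero.2 Fintype.card_ne_zero
  simp [holevoInfo, ← Nat.cast_smul_eq_nsmul ℝ, smul_smul, hcard]

omit [DecidableEq ι] in
lemma trace_sum_inv_card_smul [Nonempty κ] (hA : ∀ x, IsDensity (A x)) :
    (∑ x, ((Fintype.card κ : ℝ)⁻¹ • A) x).trace = 1 := by
  have hcard : (Fintype.card κ : ℂ) ≠ 0 := Nat.cast_ne_zero.2 Fintype.card_ne_zero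
  simp [trace_sum, trace_smul, (hA _).2, hcard]

lemma condEnt_inv_card_smul [Nonempty κ] (hA : ∀ x, IsDensity (A x)) :
    condEnt ((Fintype.card κ : ℝ)⁻¹ • A) = Real.log (Fintype.card κ) - holevoInfo A := by
  have hcard : (Fintype.card κ : ℝ) ≠ 0 := Nat.cast_ne_zero.2 Fintype.card_ne_zero
  have hherm (x : κ) : (A x).IsHermitian := (hA x).1.isHermitian
  have htrace : (∑ x, A x).trace.re = Fintype.card κ := by simp [trace_sum, (hA _).2]
  rw [condEnt_smul hherm, holevoInfo, vnEnt_smul (isSelfAdjoint_sum _ fun x _ ↦ hherm x), htrace,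
    condEnt, Real.negMulLog, Real.log_inv]
  field_simp
  ring

theorem holevoInfo_le_log_card [Nonempty κ] (hA : ∀ x, IsDensity (A x)) :
    holevoInfo A ≤ Real.log (Fintype.card κ) := by
  have hcond := condEnt_nonneg fun x ↦
    (hA x).1.smul (a := (Fintype.card κ : ℝ)⁻¹) (by positivity)
  exact sub_nonneg.1 (hcond.trans_eq (condEnt_inv_card_smul hA))

theorem holevoInfo_le_of_traceNorm_sub_le [Nonempty κ] (hA : ∀ x, IsDensity (A x))
    {σ : Matrix ι ι ℂ} (hσ : IsDensity σ) {δ : ℝ}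
    (hδ : (Fintype.card κ : ℝ)⁻¹ * ∑ x, traceNorm (A x - σ) ≤ δ) :
    holevoInfo A ≤ δ * Real.log (Fintype.card κ) + g2 δ := by
  set c : ℝ := (Fintype.card κ : ℝ)⁻¹
  set s : ℝ := c * ∑ x, traceNorm (A x - σ)
  have hc : 0 ≤ c := by positivity
  have hherm (x : κ) : (A x - σ).IsHermitian := (hA x).1.isHermitian.sub hσ.1.isHermitian
  have hs : 0 ≤ s := mul_nonneg hc (Finset.sum_nonneg fun x _ ↦ traceNorm_nonneg (hherm x))
  have hdist : ∑ x, traceNorm ((c • A) x - (c • fun _ ↦ σ) x) = 2 * (s / 2) := by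
    simp only [Pi.smul_apply, ← smul_sub, traceNorm_smul (hherm _) hc, ← Finset.mul_sum]
    ring
  have hafw := condEnt_le_condEnt_add_log_card_add_g2 (A := c • A) (B := c • fun _ ↦ σ)
    (fun x ↦ (hA x).1.smul hc) (fun _ ↦ hσ.1.smul hc) (trace_sum_inv_card_smul hA)
    (trace_sum_inv_card_smul fun _ ↦ hσ) hdist
  rw [condEnt_inv_card_smul hA, condEnt_inv_card_smul fun _ ↦ hσ, holevoInfo_const] at hafw
  have hlog : s / 2 * Real.log (Fintype.card κ) ≤ δ * Real.log (Fintype.card κ) :=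
    mul_le_mul_of_nonneg_right (by linarith) (Real.log_natCast_nonneg _)
  have hg2 : g2 (s / 2) ≤ g2 δ :=
    monotoneOn_g2 (div_nonneg hs zero_le_two) (hs.trans hδ) (by linarith)
  linarith

end HolevoInformation

section Density

open scoped MatrixOrder Matrix.Norms.L2Operator

lemma isDensity_ptraceLeft {α β : Type*} [Fintype α] [Fintype β]
    {ρ : Matrix (α × β) (α × β) ℂ} (hρ : IsDensity ρ) : IsDensity (ptraceLeft ρ) := by
  have hsum : ptraceLeft ρ = ∑ a, ρ.submatrix (Prod.mk a) (Prod.mk a) := by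
    ext b b'
    simp [ptraceLeft, Matrix.sum_apply]
  refine ⟨hsum ▸ posSemidef_sum _ fun a _ ↦ hρ.1.submatrix _, ?_⟩
  rw [← hρ.2, trace, trace, Fintype.sum_prod_type_right]
  rfl

variable {β : Type*} [Fintype β] {d n : ℕ}

lemma stringState_mul (ω τ : Fin d → Matrix β β ℂ) (x : Fin n → Fin d) :
    stringState (ω * τ) x = stringState ω x * stringState τ x := by
  ext a b
  simp only [stringState, of_apply, Pi.mul_apply, mul_apply, Fintype.prod_sum,
    Finset.prod_mul_distrib]

omit [Fintype β] in
lemma conjTranspose_stringState (ω : Fin d → Matrix β β ℂ) (x : Fin n → Fin d) :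
    (stringState ω x)ᴴ = stringState (star ω) x := by
  ext a b
  simp [stringState]

lemma trace_stringState (ω : Fin d → Matrix β β ℂ) (x : Fin n → Fin d) :
    (stringState ω x).trace = ∏ i, (ω (x i)).trace := by
  simp only [trace, diag_apply, stringState, of_apply, Fintype.prod_sum]

lemma isDensity_stringState {ω : Fin d → Matrix β β ℂ} (hω : ∀ j, IsDensity (ω j))
    (x : Fin n → Fin d) : IsDensity (stringState ω x) := by
  refine ⟨?_, by simp [trace_stringState, (hω _).2]⟩
  choose C hC using fun j ↦ CStarAlgebra.nonneg_iff_eq_star_mul_self.1 (hω j).1.nonneg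
  obtain rfl : ω = star C * C := funext hC
  rw [stringState_mul, ← conjTranspose_stringState]
  exact posSemidef_conjTranspose_mul_self _

omit [DecidableEq ι] in
lemma isDensity_inv_card_smul_sum {κ : Type*} [Fintype κ] [Nonempty κ] {A : κ → Matrix ι ι ℂ}
    (hA : ∀ x, IsDensity (A x)) : IsDensity ((Fintype.card κ : ℝ)⁻¹ • ∑ x, A x) :=
  ⟨(posSemidef_sum _ fun x _ ↦ (hA x).1).smul (by positivity), by
    simpa only [Pi.smul_apply, ← Finset.smul_sum] using trace_sum_inv_card_smul hA⟩

end Density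

section CovertCode

variable {B W : Type*} [Fintype B] {π : Fin 2 → Matrix (B × W) (B × W) ℂ}
  {n M K : ℕ} {f : Fin M → Fin K → Fin n → Fin 2}

lemma isDensity_willieWord [Fintype W] (hπ : ∀ x, IsDensity (π x)) (x : Fin n → Fin 2) :
    IsDensity (willieWord π x) :=
  isDensity_stringState (fun j ↦ isDensity_ptraceLeft (hπ j)) x

variable (π f) in
lemma wMsg_eq_inv_card_smul_sum (m : Fin M) :
    wMsg π f m = (Fintype.card (Fin K) : ℝ)⁻¹ • ∑ k, willieWord π (f m k) := by
  rw [wMsg, Complex.coe_smul, Fintype.card_fin]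

variable (π f) in
lemma wBar_eq_inv_card_smul_sum_wMsg :
    wBar π f = (Fintype.card (Fin M) : ℝ)⁻¹ • ∑ m, wMsg π f m := by
  simp only [wBar, wMsg, Complex.coe_smul, Fintype.card_fin, ← Finset.smul_sum, smul_smul, mul_inv]

variable (π f) in
lemma condMI_eq_average_holevoInfo [Fintype W] [DecidableEq W] :
    condMI π f = (M : ℝ)⁻¹ * ∑ m, holevoInfo fun k ↦ willieWord π (f m k) := by
  simp only [condMI, holevoInfo, wMsg_eq_inv_card_smul_sum, Fintype.card_fin]

variable (π f) in
theorem jointMI_eq_condMI_add_holevoInfo [Fintype W] [DecidableEq W] :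
    jointMI π f = condMI π f + holevoInfo (wMsg π f) := by
  rw [jointMI, condMI, holevoInfo, ← wBar_eq_inv_card_smul_sum_wMsg, Fintype.card_fin,
    Finset.sum_sub_distrib, ← Finset.mul_sum, mul_inv]
  ring

variable (π f) in
theorem jointMI_eq_inputMI [Fintype W] [DecidableEq W] : jointMI π f = inputMI π f := by
  have hfiber := Finset.sum_fiberwise' Finset.univ (fun p : Fin M × Fin K ↦ f p.1 p.2)
    fun x ↦ vnEnt (willieWord π x)
  simp only [Finset.sum_const, nsmul_eq_mul, Fintype.sum_prod_type] at hfiber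
  rw [jointMI, inputMI, ← hfiber, Finset.mul_sum]
  congr! 2 with x
  ring

lemma isDensity_wMsg [Fintype W] [NeZero K] (hπ : ∀ x, IsDensity (π x)) (m : Fin M) :
    IsDensity (wMsg π f m) := by
  rw [wMsg_eq_inv_card_smul_sum]
  exact isDensity_inv_card_smul_sum fun k ↦ isDensity_willieWord hπ (f m k)

theorem condMI_le_log [Fintype W] [DecidableEq W] [NeZero M] [NeZero K]
    (hπ : ∀ x, IsDensity (π x)) :
    condMI π f ≤ Real.log K := by
  have hM : (0 : ℝ) < M := Nat.cast_pos.2 (NeZero.pos M)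
  rw [condMI_eq_average_holevoInfo, inv_mul_le_iff₀ hM]
  calc ∑ m, holevoInfo (fun k ↦ willieWord π (f m k))
      ≤ ∑ _m : Fin M, Real.log (Fintype.card (Fin K)) :=
        Finset.sum_le_sum fun m _ ↦ holevoInfo_le_log_card fun k ↦ isDensity_willieWord hπ (f m k)
    _ = M * Real.log K := by simp

end CovertCode

/-- **Key-rate lower bound via secrecy continuity**:
`log|K| ≥ I(k;W^n|m) ≥ I(mk;W^n) − δ_sec log|M| − g₂(δ_sec) = I(x^n;W^n) − δ_sec log|M| − g₂(δ_sec)`. -/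
theorem key_rate_lower_bound_via_secrecy
    (π : Fin 2 → Matrix (B × W) (B × W) ℂ)
    (hπ : ∀ x, IsDensity (π x))
    {n M K : ℕ} (hM : 0 < M) (hK : 0 < K)
    (f : Fin M → Fin K → Fin n → Fin 2)
    (δsec : ℝ) (hδ : 0 ≤ δsec)
    (ρ' : Matrix (Fin n → W) (Fin n → W) ℂ) (hρ' : IsDensity ρ')
    (hsec : (M : ℝ)⁻¹ * ∑ m, traceNorm (wMsg π f m - ρ') ≤ δsec) :
    condMI π f ≤ Real.log K ∧
    jointMI π f - δsec * Real.log M - g2 δsec ≤ condMI π f ∧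
    jointMI π f = inputMI π f := by
  have : NeZero M := ⟨hM.ne'⟩
  have : NeZero K := ⟨hK.ne'⟩
  have hholevo : holevoInfo (wMsg π f) ≤ δsec * Real.log M + g2 δsec := by
    simpa only [Fintype.card_fin] using
      holevoInfo_le_of_traceNorm_sub_le (isDensity_wMsg hπ) hρ' (by simpa using hsec)
  refine ⟨condMI_le_log hπ, ?_, jointMI_eq_inputMI π f⟩
  rw [jointMI_eq_condMI_add_holevoInfo]
  linarith

end Statement18

end CovertPaper
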